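/- arXiv:1011.5687 — 6 statements merged into one kernel-verified Lean document; each statement's English description precedes it below -/
import Mathlib

section
/- For every topological space X and propositional letter p: the formula [≠]p → [≠]□p (axiom AT₁) is valid in X if and only if X is a T₁ space, i.e., every one-element subset of X is closed. -/
/-- Bimodal formulas: propositional letters, falsum, implication, box, and
the difference modality `[≠]` (called `dbox` here). -/
inductive BForm : Type
  | var : ℕ → BForm
  | bot : BForm
  | imp : BForm → BForm → BForm
  | box : BForm → BForm
  | dbox : BForm → BForm
  deriving DecidableEq

namespace BForm

/-- Classical negation. -/
def neg (A : BForm) : BForm := imp A bot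

/-- Classical conjunction. -/
def conj (A B : BForm) : BForm := neg (imp A (neg B))

/-- `◇A = ¬□¬A`. -/
def dia (A : BForm) : BForm := neg (box (neg A))

/-- `⟨≠⟩A = ¬[≠]¬A`. -/
def ddia (A : BForm) : BForm := neg (dbox (neg A))

end BForm

/-- Truth at a point of a Kripke model over a frame `(W, R, R_D)`. -/
def ksat {W : Type} (R RD : W → W → Prop) (θ : ℕ → Set W) : W → BForm → Prop
  | x, .var n => x ∈ θ n
  | _, .bot => False
  | x, .imp A B => ksat R RD θ x A → ksat R RD θ x B
  | x, .box A => ∀ y, R x y → ksat R RD θ y A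
  | x, .dbox A => ∀ y, RD x y → ksat R RD θ y A

/-- Validity in a Kripke frame: truth at every point under every valuation. -/
def kvalid {W : Type} (R RD : W → W → Prop) (A : BForm) : Prop :=
  ∀ (θ : ℕ → Set W) (x : W), ksat R RD θ x A

/-- Truth at a point of a topological model. -/
def tsat {X : Type} [TopologicalSpace X] (θ : ℕ → Set X) : X → BForm → Prop
  | x, .var n => x ∈ θ n
  | _, .bot => False
  | x, .imp A B => tsat θ x A → tsat θ x B
  | x, .box A => ∃ U : Set X, IsOpen U ∧ x ∈ U ∧ ∀ y ∈ U, tsat θ y A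
  | x, .dbox A => ∀ y, y ≠ x → tsat θ y A

/-- Validity in a topological space. -/
def tvalid (X : Type) [TopologicalSpace X] (A : BForm) : Prop :=
  ∀ (θ : ℕ → Set X) (x : X), tsat θ x A

/-- Uniform substitution of formulas for propositional letters. -/
def substF (σ : ℕ → BForm) : BForm → BForm
  | .var n => σ n
  | .bot => .bot
  | .imp A B => .imp (substF σ A) (substF σ B)
  | .box A => .box (substF σ A)
  | .dbox A => .dbox (substF σ A)

/-- Boolean evaluation of a formula, treating letters and modal formulas as atoms. -/
def beval (v : BForm → Bool) : BForm → Bool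
  | .var n => v (.var n)
  | .bot => false
  | .imp A B => !(beval v A) || beval v B
  | .box A => v (.box A)
  | .dbox A => v (.dbox A)

/-- A classical tautology of the bimodal language. -/
def Tautology (A : BForm) : Prop := ∀ v : BForm → Bool, beval v A = true

/-- The letter `p`. -/
def pLet : BForm := .var 0
/-- The letter `q`. -/
def qLet : BForm := .var 1

/-- The least bimodal logic containing `K₂`, the S4D axioms and the extra axioms `Ax`,
closed under modus ponens, uniform substitution, and both necessitation rules. -/
inductive Logic (Ax : Set BForm) : BForm → Prop
  | taut {A : BForm} : Tautology A → Logic Ax A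
  | axKBox : Logic Ax (.imp (.box (.imp pLet qLet)) (.imp (.box pLet) (.box qLet)))
  | axKD : Logic Ax (.imp (.dbox (.imp pLet qLet)) (.imp (.dbox pLet) (.dbox qLet)))
  | axBD : Logic Ax (.imp pLet (.dbox (BForm.ddia pLet)))
  | ax4mD : Logic Ax (.imp (BForm.conj pLet (.dbox pLet)) (.dbox (.dbox pLet)))
  | axTBox : Logic Ax (.imp (.box pLet) pLet)
  | ax4Box : Logic Ax (.imp (.box pLet) (.box (.box pLet)))
  | axDBox : Logic Ax (.imp (BForm.conj (.dbox pLet) pLet) (.box pLet))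
  | extra {A : BForm} : A ∈ Ax → Logic Ax A
  | mp {A B : BForm} : Logic Ax (.imp A B) → Logic Ax A → Logic Ax B
  | subst {A : BForm} (σ : ℕ → BForm) : Logic Ax A → Logic Ax (substF σ A)
  | necBox {A : BForm} : Logic Ax A → Logic Ax (.box A)
  | necD {A : BForm} : Logic Ax A → Logic Ax (.dbox A)

/-- The axiom (DS): `[≠]p → ◇p`. -/
def dsAx : BForm := .imp (.dbox pLet) (BForm.dia pLet)

/-- The axiom (AT₁): `[≠]p → [≠]□p`. -/
def at1Ax : BForm := .imp (.dbox pLet) (.dbox (.box pLet))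

/-- The logic S4D. -/
def S4D : BForm → Prop := Logic ∅

/-- The logic S4DS = S4D + (DS). -/
def S4DS : BForm → Prop := Logic {dsAx}

/-- The logic S4DT1S = S4DS + (AT₁). -/
def S4DT1S : BForm → Prop := Logic {dsAx, at1Ax}

/-- `(W, R, R_D)` is an S4D-frame: `R` is reflexive and transitive, `R_D` is
symmetric and pseudo-transitive, and `R ⊆ R_D ∪ Id`. -/
structure IsS4DFrame {W : Type} (R RD : W → W → Prop) : Prop where
  refl : ∀ x, R x x
  trans : ∀ ⦃x y z⦄, R x y → R y z → R x z
  symm : ∀ ⦃x y⦄, RD x y → RD y x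
  ptrans : ∀ ⦃x y z⦄, RD x y → RD y z → x ≠ z → RD x z
  inc : ∀ ⦃x y⦄, R x y → RD x y ∨ x = y

/-- A T₁-frame: every `R_D`-irreflexive point is `R`-minimal. -/
def IsT1Frame {W : Type} (R RD : W → W → Prop) : Prop :=
  ∀ x, ¬ RD x x → ∀ y, R y x → y = x

/-- A DS-frame: every `R_D`-irreflexive point has an `R`-successor distinct from itself. -/
def IsDSFrame {W : Type} (R RD : W → W → Prop) : Prop :=
  ∀ x, ¬ RD x x → ∃ y, y ≠ x ∧ R x y

/-- A cd-p-morphism from a topological space `X` onto a Kripke frame `(W, R, R_D)`. -/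
structure IsCdPMorphism {X : Type} [TopologicalSpace X] {W : Type}
    (R RD : W → W → Prop) (f : X → W) : Prop where
  surj : Function.Surjective f
  cl : ∀ w : W, closure (f ⁻¹' {w}) = f ⁻¹' {v | R v w}
  diff : ∀ w : W, {x : X | ∃ y, y ≠ x ∧ f y = w} = f ⁻¹' {v | RD v w}

/-- A p-morphism between Kripke frames. -/
structure IsPMorphism {W W' : Type} (R RD : W → W → Prop) (R' RD' : W' → W' → Prop)
    (f : W → W') : Prop where
  surj : Function.Surjective f
  forth : ∀ ⦃x y⦄, R x y → R' (f x) (f y)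
  forthD : ∀ ⦃x y⦄, RD x y → RD' (f x) (f y)
  back : ∀ x z, R' (f x) z → ∃ y, R x y ∧ f y = z
  backD : ∀ x z, RD' (f x) z → ∃ y, RD x y ∧ f y = z

/-- The Alexandrov topology on `W` whose open sets are the `R`-upward-closed sets. -/
def alexandrov {W : Type} (R : W → W → Prop) : TopologicalSpace W where
  IsOpen U := ∀ ⦃x⦄, x ∈ U → ∀ ⦃y⦄, R x y → y ∈ U
  isOpen_univ := fun _ _ _ _ => trivial
  isOpen_inter := fun _ _ hU hV x hx y hxy => ⟨hU hx.1 hxy, hV hx.2 hxy⟩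
  isOpen_sUnion := fun _ hS x hx y hxy => by
    obtain ⟨U, hU, hxU⟩ := hx
    exact ⟨U, hU, hS U hU hxU hxy⟩

/-!
If `p` denotes `S`, then AT₁ holds at `x` iff `{x}ᶜ ⊆ S` implies `{x}ᶜ ⊆ interior S`. The critical
case is the least such `S`, namely `{x}ᶜ` itself, so AT₁ holds at `x` under all valuations iff
`{x}ᶜ` is open.
-/

section LocalCorrespondence

variable {X : Type} [TopologicalSpace X] {x : X}

/-- The truth set of a formula in a topological model. It turns the semantics of `□` and `[≠]` into
statements about interiors and inclusions of sets. -/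
def truthSet (θ : ℕ → Set X) (A : BForm) : Set X := {y | tsat θ y A}

theorem truthSet_var (θ : ℕ → Set X) (n : ℕ) : truthSet θ (.var n) = θ n :=
  rfl

theorem truthSet_box (θ : ℕ → Set X) (A : BForm) :
    truthSet θ (.box A) = interior (truthSet θ A) := by
  ext y
  simp only [truthSet, tsat, Set.mem_ofPred_eq, mem_interior, Set.subset_def]
  exact ⟨fun ⟨U, hU, hy, hA⟩ => ⟨U, hA, hU, hy⟩, fun ⟨U, hA, hU, hy⟩ => ⟨U, hU, hy, hA⟩⟩

theorem tsat_dbox_iff_compl_subset (θ : ℕ → Set X) (A : BForm) :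
    tsat θ x (.dbox A) ↔ {x}ᶜ ⊆ truthSet θ A := by
  simp only [tsat, truthSet, Set.subset_def, Set.mem_compl_iff, Set.mem_singleton_iff,
    Set.mem_ofPred_eq, ne_eq]

theorem tsat_dbox_imp_dbox_box_iff (θ : ℕ → Set X) (A : BForm) :
    tsat θ x (.imp (.dbox A) (.dbox (.box A))) ↔
      ({x}ᶜ ⊆ truthSet θ A → {x}ᶜ ⊆ interior (truthSet θ A)) := by
  rw [tsat, tsat_dbox_iff_compl_subset, tsat_dbox_iff_compl_subset, truthSet_box]

theorem tsat_dbox_imp_dbox_box_of_isClosed_singleton (hx : IsClosed ({x} : Set X))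
    (θ : ℕ → Set X) (A : BForm) : tsat θ x (.imp (.dbox A) (.dbox (.box A))) :=
  (tsat_dbox_imp_dbox_box_iff θ A).mpr hx.isOpen_compl.subset_interior_iff.mpr

theorem forall_tsat_dbox_imp_dbox_box_iff_isClosed_singleton (n : ℕ) :
    (∀ θ : ℕ → Set X, tsat θ x (.imp (.dbox (.var n)) (.dbox (.box (.var n))))) ↔
      IsClosed ({x} : Set X) := by
  refine ⟨fun h => ?_, fun hx θ => tsat_dbox_imp_dbox_box_of_isClosed_singleton hx θ (.var n)⟩
  rw [← isOpen_compl_iff, ← subset_interior_iff_isOpen]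
  have at1_for_compl := (tsat_dbox_imp_dbox_box_iff (fun _ => {x}ᶜ) (.var n)).mp (h _)
  rw [truthSet_var] at at1_for_compl
  exact at1_for_compl subset_rfl

end LocalCorrespondence

/-- The axiom (AT₁) `[≠]p → [≠]□p` is valid in a topological space `X`
iff `X` is a T₁ space (every singleton is closed). -/
theorem at1_valid_iff_t1 (X : Type) [TopologicalSpace X] (n : ℕ) :
    tvalid X (.imp (.dbox (.var n)) (.dbox (.box (.var n)))) ↔
      ∀ x : X, IsClosed ({x} : Set X) := by
  rw [tvalid, forall_comm]
  exact forall_congr' fun x => forall_tsat_dbox_imp_dbox_box_iff_isClosed_singleton n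
end

section
/- For every topological space X and propositional letter p: the formula [≠]p → ◇p (axiom DS) is valid in X if and only if X is dense-in-itself, i.e., X has no isolated points (no singleton {x} is open). -/
section Correspondence

open Filter Set Topology

theorem mem_closure_compl_singleton_iff_not_isOpen {X : Type*} [TopologicalSpace X] {x : X} :
    x ∈ closure ({x}ᶜ : Set X) ↔ ¬ IsOpen ({x} : Set X) := by
  rw [mem_closure_iff_nhdsWithin_neBot, isOpen_singleton_iff_punctured_nhds, neBot_iff]

variable {X : Type} [TopologicalSpace X] {θ : ℕ → Set X} {x : X} {A : BForm}

theorem tsat_box_iff_eventually : tsat θ x (.box A) ↔ ∀ᶠ y in 𝓝 x, tsat θ y A :=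
  calc
    tsat θ x (.box A) ↔ ∃ U, IsOpen U ∧ x ∈ U ∧ ∀ y ∈ U, tsat θ y A := Iff.rfl
    _ ↔ ∃ U, (∀ y ∈ U, tsat θ y A) ∧ IsOpen U ∧ x ∈ U := by simp only [and_comm, and_assoc]
    _ ↔ ∀ᶠ y in 𝓝 x, tsat θ y A := eventually_nhds_iff.symm

theorem tsat_dia_iff_mem_closure : tsat θ x A.dia ↔ x ∈ closure {y | tsat θ y A} :=
  (not_congr tsat_box_iff_eventually).trans mem_closure_iff_frequently.symm

theorem tsat_dbox_iff_compl_singleton_subset :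
    tsat θ x (.dbox A) ↔ {x}ᶜ ⊆ {y | tsat θ y A} :=
  Iff.rfl

theorem tsat_dbox_imp_dia_iff :
    tsat θ x (.imp (.dbox A) A.dia) ↔
      ({x}ᶜ ⊆ {y | tsat θ y A} → x ∈ closure {y | tsat θ y A}) :=
  imp_congr tsat_dbox_iff_compl_singleton_subset tsat_dia_iff_mem_closure

-- Closure is monotone, so the critical valuation of the letter is the least one allowed, `{x}ᶜ`.
theorem forall_tsat_dbox_imp_dia_iff_not_isOpen_singleton (x : X) (n : ℕ) :
    (∀ θ, tsat θ x (.imp (.dbox (.var n)) (BForm.dia (.var n)))) ↔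
      ¬ IsOpen ({x} : Set X) := by
  rw [← mem_closure_compl_singleton_iff_not_isOpen]
  constructor
  · intro h
    exact tsat_dbox_imp_dia_iff.mp (h fun _ => {x}ᶜ) Subset.rfl
  · intro hx θ
    exact tsat_dbox_imp_dia_iff.mpr fun hsub => closure_mono hsub hx

end Correspondence

/-- The axiom (DS) `[≠]p → ◇p` is valid in a topological space `X`
iff `X` is dense-in-itself (no singleton is open). -/
theorem ds_valid_iff_dense_in_itself (X : Type) [TopologicalSpace X] (n : ℕ) :
    tvalid X (.imp (.dbox (.var n)) (BForm.dia (.var n))) ↔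
      ∀ x : X, ¬ IsOpen ({x} : Set X) :=
  forall_comm.trans <| forall_congr' fun x =>
    forall_tsat_dbox_imp_dia_iff_not_isOpen_singleton x n
end

section
/- Let F = (W, R, R_D) be an S4D-frame and p a propositional letter. Then F ⊨ [≠]p → [≠]□p (axiom AT₁) if and only if F is a T₁-frame, i.e., every R_D-irreflexive point x (a point with not xR_Dx) is R-minimal (yRx implies y = x). -/
theorem kvalid_at1_iff {W : Type} {R RD : W → W → Prop} (n : ℕ) :
    kvalid R RD (.imp (.dbox (.var n)) (.dbox (.box (.var n)))) ↔
      ∀ ⦃x y z⦄, RD x y → R y z → RD x z := by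
  constructor
  · intro hvalid x y z hxy hyz
    -- The least valuation making `[≠]p` true at `x`.
    let θ : ℕ → Set W := fun _ ↦ {w | RD x w}
    have hbox : ksat R RD θ x (.dbox (.var n)) := fun _ hxw ↦ hxw
    exact hvalid θ x hbox y hxy z hyz
  · intro hcomp θ x hp y hxy z hyz
    exact hp z (hcomp hxy hyz)

section FrameConditions

variable {W : Type} {R RD : W → W → Prop}

theorem isT1Frame_iff_forall_rd_self (hsymm : ∀ ⦃x y⦄, RD x y → RD y x)
    (hinc : ∀ ⦃x y⦄, R x y → RD x y ∨ x = y) :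
    IsT1Frame R RD ↔ ∀ ⦃x y⦄, RD x y → R y x → RD x x := by
  constructor
  · intro hT1 x y hxy hyx
    by_contra hirr
    obtain rfl : y = x := hT1 x hirr y hyx
    exact hirr hxy
  · intro hdiag x hirr y hyx
    exact (hinc hyx).resolve_left fun hD ↦ hirr (hdiag (hsymm hD) hyx)

theorem rd_of_rd_of_r_of_ne (hptrans : ∀ ⦃x y z⦄, RD x y → RD y z → x ≠ z → RD x z)
    (hinc : ∀ ⦃x y⦄, R x y → RD x y ∨ x = y) ⦃x y z : W⦄
    (hxy : RD x y) (hyz : R y z) (hxz : x ≠ z) : RD x z := by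
  rcases hinc hyz with hD | rfl
  · exact hptrans hxy hD hxz
  · exact hxy

end FrameConditions

theorem at1_frame_valid_iff_t1frame_general {W : Type} {R RD : W → W → Prop}
    (hsymm : ∀ ⦃x y⦄, RD x y → RD y x)
    (hptrans : ∀ ⦃x y z⦄, RD x y → RD y z → x ≠ z → RD x z)
    (hinc : ∀ ⦃x y⦄, R x y → RD x y ∨ x = y) (n : ℕ) :
    kvalid R RD (.imp (.dbox (.var n)) (.dbox (.box (.var n)))) ↔ IsT1Frame R RD := by
  rw [kvalid_at1_iff, isT1Frame_iff_forall_rd_self hsymm hinc]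
  constructor
  · intro hcomp x y hxy hyx
    exact hcomp hxy hyx
  · intro hdiag x y z hxy hyz
    rcases eq_or_ne x z with rfl | hxz
    · exact hdiag hxy hyz
    · exact rd_of_rd_of_r_of_ne hptrans hinc hxy hyz hxz

/-- An S4D-frame validates (AT₁) `[≠]p → [≠]□p` iff it is a T₁-frame. -/
theorem at1_frame_valid_iff_t1frame {W : Type} (R RD : W → W → Prop)
    (hF : IsS4DFrame R RD) (n : ℕ) :
    kvalid R RD (.imp (.dbox (.var n)) (.dbox (.box (.var n)))) ↔ IsT1Frame R RD :=
  at1_frame_valid_iff_t1frame_general hF.symm hF.ptrans hF.inc n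
end

section
/- Let F = (W, R, R_D) be an S4D-frame and p a propositional letter. Then F ⊨ [≠]p → ◇p (axiom DS) if and only if F is a DS-frame, i.e., every R_D-irreflexive point x (a point with not xR_Dx) has an R-successor distinct from itself (there exists y ≠ x with xRy). -/
/-!
On an arbitrary frame, `[≠]p → ◇p` corresponds to the first-order condition that every `x` has a
common `R`- and `R_D`-successor: the least valuation making `[≠]p` true at `x` sends `p` to
`{y | x R_D y}`. When `R` is reflexive, `x` is such a successor of itself if it is
`R_D`-reflexive. When `x` is `R_D`-irreflexive and `R ⊆ R_D ∪ Id`, the common successors of `x`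
are exactly its `R`-successors other than `x`.
-/

theorem exists_common_succ_iff_exists_ne_of_irrefl {α : Type*} {r s : α → α → Prop} {x : α}
    (hx : ¬ s x x) (hinc : ∀ ⦃y⦄, r x y → s x y ∨ x = y) :
    (∃ y, r x y ∧ s x y) ↔ ∃ y, y ≠ x ∧ r x y := by
  constructor
  · rintro ⟨y, hr, hs⟩
    exact ⟨y, fun hyx => hx (hyx ▸ hs), hr⟩
  · rintro ⟨y, hyx, hr⟩
    exact ⟨y, hr, (hinc hr).resolve_right hyx.symm⟩

section Correspondence

variable {W : Type} {R RD : W → W → Prop}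

theorem ksat_dia {θ : ℕ → Set W} {x : W} {A : BForm} :
    ksat R RD θ x A.dia ↔ ∃ y, R x y ∧ ksat R RD θ y A := by
  simp only [BForm.dia, BForm.neg, ksat, imp_false, not_forall, not_not, exists_prop]

theorem kvalid_dbox_imp_dia_iff_forall_exists_common_succ (n : ℕ) :
    kvalid R RD (.imp (.dbox (.var n)) (BForm.dia (.var n))) ↔
      ∀ x, ∃ y, R x y ∧ RD x y := by
  constructor
  · intro hvalid x
    exact ksat_dia.mp (hvalid (fun _ => {y | RD x y}) x fun _ hxy => hxy)
  · intro hsucc θ x hbox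
    obtain ⟨y, hR, hRD⟩ := hsucc x
    exact ksat_dia.mpr ⟨y, hR, hbox y hRD⟩

theorem forall_exists_common_succ_iff_isDSFrame (hrefl : ∀ x, R x x)
    (hinc : ∀ ⦃x y⦄, R x y → RD x y ∨ x = y) :
    (∀ x, ∃ y, R x y ∧ RD x y) ↔ IsDSFrame R RD := by
  refine forall_congr' fun x => ?_
  by_cases hx : RD x x
  · exact iff_of_true ⟨x, hrefl x, hx⟩ (absurd hx)
  · rw [exists_common_succ_iff_exists_ne_of_irrefl hx (@hinc x), imp_iff_right hx]

theorem ds_frame_valid_iff_dsframe_general (hrefl : ∀ x, R x x)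
    (hinc : ∀ ⦃x y⦄, R x y → RD x y ∨ x = y) (n : ℕ) :
    kvalid R RD (.imp (.dbox (.var n)) (BForm.dia (.var n))) ↔ IsDSFrame R RD :=
  (kvalid_dbox_imp_dia_iff_forall_exists_common_succ n).trans
    (forall_exists_common_succ_iff_isDSFrame hrefl hinc)

end Correspondence

/-- An S4D-frame validates (DS) `[≠]p → ◇p` iff it is a DS-frame. -/
theorem ds_frame_valid_iff_dsframe {W : Type} (R RD : W → W → Prop)
    (hF : IsS4DFrame R RD) (n : ℕ) :
    kvalid R RD (.imp (.dbox (.var n)) (BForm.dia (.var n))) ↔ IsDSFrame R RD :=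
  ds_frame_valid_iff_dsframe_general hF.refl hF.inc n
end

section
/- Finite model property of S4D: for every bimodal formula A, A ∈ S4D if and only if F ⊨ A for every finite S4D-frame F. -/
/-!
Soundness is an induction on derivations. For completeness, the canonical model of any extension of
S4D lives on an S4D-frame: the two conditions that mention equality hold because distinct maximal
consistent sets `x`, `z` are separated by some `C`, which allows `[≠]A` to be weakened to
`[≠](A ∨ C)` at `x`, where `A ∨ C` is true, and the axioms then apply to `A ∨ C`.

To pass to a finite frame, first restrict to the subframe generated by a point. Pseudo-transitivity
and symmetry say that the reflexive closure of `R_D` is an equivalence relation, so in a generated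
subframe any two distinct points are `R_D`-related. Filtration, transitive (Lemmon) for `□` and
minimal for `[≠]`, preserves this property because distinct classes have distinct representatives,
and the property entails both pseudo-transitivity and `R ⊆ R_D ∪ Id`.
-/

open BForm Relation

/-! ### Boolean evaluation and tautologies -/

theorem beval_imp {v : BForm → Bool} {A B : BForm} :
    beval v (imp A B) = true ↔ (beval v A = true → beval v B = true) := by
  cases hA : beval v A <;> simp [beval, hA]

theorem beval_neg {v : BForm → Bool} {A : BForm} :
    beval v (neg A) = true ↔ ¬ beval v A = true := by
  simp [neg, beval]

namespace Tautology

theorem bot_imp (A : BForm) : Tautology (imp bot A) :=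
  fun _ => rfl

theorem imp_self (A : BForm) : Tautology (imp A A) :=
  fun _ => beval_imp.2 id

theorem imp_imp_left (A B : BForm) : Tautology (imp A (imp B A)) := by
  intro v
  simp only [beval_imp]
  tauto

theorem imp_distrib (A B C : BForm) :
    Tautology (imp (imp A (imp B C)) (imp (imp A B) (imp A C))) := by
  intro v
  simp only [beval_imp]
  tauto

theorem neg_imp_imp (A B : BForm) : Tautology (imp (neg A) (imp A B)) := by
  intro v
  simp only [beval_imp, beval_neg]
  tauto

theorem imp_neg_imp (A B : BForm) : Tautology (imp A (imp (neg A) B)) := by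
  intro v
  simp only [beval_imp, beval_neg]
  tauto

theorem imp_cases (A B : BForm) :
    Tautology (imp (imp A B) (imp (imp (neg A) B) B)) := by
  intro v
  simp only [beval_imp, beval_neg]
  tauto

end Tautology

/-! ### Soundness -/

section Soundness

variable {W : Type} {R RD : W → W → Prop} {θ : ℕ → Set W} {x : W} {A B : BForm}

theorem ksat_conj : ksat R RD θ x (conj A B) ↔ ksat R RD θ x A ∧ ksat R RD θ x B := by
  simp only [conj, neg, ksat]
  tauto

theorem ksat_substF {σ : ℕ → BForm} :
    ksat R RD θ x (substF σ A) ↔ ksat R RD (fun n => {w | ksat R RD θ w (σ n)}) x A := by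
  induction A generalizing x with
  | var n => rfl
  | bot => rfl
  | imp A B ihA ihB => simp only [substF, ksat, ihA, ihB]
  | box A ih => simp only [substF, ksat, ih]
  | dbox A ih => simp only [substF, ksat, ih]

open Classical in
theorem beval_ksat_iff :
    beval (fun B => decide (ksat R RD θ x B)) A = true ↔ ksat R RD θ x A := by
  induction A with
  | var n => simp only [beval, decide_eq_true_eq]
  | bot => simp only [beval, ksat, Bool.false_eq_true]
  | imp A B ihA ihB => simp only [beval_imp, ksat, ihA, ihB]
  | box A _ => simp only [beval, decide_eq_true_eq]
  | dbox A _ => simp only [beval, decide_eq_true_eq]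

theorem Tautology.kvalid (hA : Tautology A) : kvalid R RD A :=
  fun _ _ => beval_ksat_iff.1 (hA _)

theorem Logic.sound {Ax : Set BForm} (hF : IsS4DFrame R RD) (hAx : ∀ B ∈ Ax, kvalid R RD B)
    (hA : Logic Ax A) : kvalid R RD A := by
  induction hA with
  | taut hA => exact hA.kvalid
  | axKBox => exact fun θ x himp hp y hxy => himp y hxy (hp y hxy)
  | axKD => exact fun θ x himp hp y hxy => himp y hxy (hp y hxy)
  | axBD => exact fun θ x hp y hxy hnp => hnp x (hF.symm hxy) hp
  | ax4mD =>
    intro θ x h y hxy z hyz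
    obtain ⟨hx, hsucc⟩ := ksat_conj.1 h
    by_cases hxz : x = z
    · exact hxz ▸ hx
    · exact hsucc z (hF.ptrans hxy hyz hxz)
  | axTBox => exact fun θ x h => h x (hF.refl x)
  | ax4Box => exact fun θ x h y hxy z hyz => h z (hF.trans hxy hyz)
  | axDBox =>
    intro θ x h y hxy
    obtain ⟨hsucc, hx⟩ := ksat_conj.1 h
    rcases hF.inc hxy with hxy | rfl
    · exact hsucc y hxy
    · exact hx
  | extra hA => exact hAx _ hA
  | mp _ _ ihimp ihA => exact fun θ x => ihimp θ x (ihA θ x)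
  | subst σ _ ih => exact fun θ x => ksat_substF.2 (ih _ x)
  | necBox _ ih => exact fun θ x y _ => ih θ y
  | necD _ ih => exact fun θ x y _ => ih θ y

end Soundness

/-! ### Axiom schemes -/

namespace Logic

variable {Ax : Set BForm} (A B : BForm)

theorem box_imp_distrib : Logic Ax (imp (box (imp A B)) (imp (box A) (box B))) :=
  subst (fun | 0 => A | _ => B) axKBox

theorem dbox_imp_distrib : Logic Ax (imp (dbox (imp A B)) (imp (dbox A) (dbox B))) :=
  subst (fun | 0 => A | _ => B) axKD

theorem imp_dbox_ddia : Logic Ax (imp A (dbox (ddia A))) :=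
  subst (fun _ => A) axBD

theorem conj_dbox_imp_dbox_dbox : Logic Ax (imp (conj A (dbox A)) (dbox (dbox A))) :=
  subst (fun _ => A) ax4mD

theorem box_imp_self : Logic Ax (imp (box A) A) :=
  subst (fun _ => A) axTBox

theorem box_imp_box_box : Logic Ax (imp (box A) (box (box A))) :=
  subst (fun _ => A) ax4Box

theorem dbox_conj_imp_box : Logic Ax (imp (conj (dbox A) A) (box A)) :=
  subst (fun _ => A) axDBox

end Logic

/-! ### Theories and Lindenbaum's lemma -/

/-- A theory over the logic `Logic Ax`: a set of formulas containing the logic and closed under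
modus ponens, but not necessarily under substitution or necessitation. -/
structure IsTheory (Ax T : Set BForm) : Prop where
  mem_of_logic : ∀ ⦃A⦄, Logic Ax A → A ∈ T
  mp : ∀ ⦃A B⦄, imp A B ∈ T → A ∈ T → B ∈ T

/-- A maximal consistent set over `Logic Ax`, with maximality expressed as negation
completeness. -/
structure IsMCS (Ax T : Set BForm) : Prop extends IsTheory Ax T where
  bot_notMem : bot ∉ T
  mem_or_neg_mem : ∀ A, A ∈ T ∨ neg A ∈ T

theorem isTheory_logic (Ax : Set BForm) : IsTheory Ax {A | Logic Ax A} where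
  mem_of_logic _ := id
  mp _ _ := Logic.mp

namespace IsTheory

variable {Ax T : Set BForm} {A B : BForm}

theorem mem_of_logic_imp (hT : IsTheory Ax T) (h : Logic Ax (imp A B)) (hA : A ∈ T) : B ∈ T :=
  hT.mp (hT.mem_of_logic h) hA

theorem mem_of_tautology_imp (hT : IsTheory Ax T) (h : Tautology (imp A B)) (hA : A ∈ T) : B ∈ T :=
  hT.mem_of_logic_imp (.taut h) hA

-- The deduction theorem: this is the theory generated by `T` and `C`.
theorem adjoin (hT : IsTheory Ax T) (C : BForm) : IsTheory Ax {D | imp C D ∈ T} where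
  mem_of_logic D hD := hT.mem_of_tautology_imp (.imp_imp_left D C) (hT.mem_of_logic hD)
  mp D E hDE hD := hT.mp (hT.mem_of_tautology_imp (.imp_distrib C D E) hDE) hD

theorem preimage_box (hT : IsTheory Ax T) : IsTheory Ax {A | box A ∈ T} where
  mem_of_logic _ hA := hT.mem_of_logic hA.necBox
  mp A B hAB hA := hT.mp (hT.mem_of_logic_imp (.box_imp_distrib A B) hAB) hA

theorem preimage_dbox (hT : IsTheory Ax T) : IsTheory Ax {A | dbox A ∈ T} where
  mem_of_logic _ hA := hT.mem_of_logic hA.necD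
  mp A B hAB hA := hT.mp (hT.mem_of_logic_imp (.dbox_imp_distrib A B) hAB) hA

theorem sUnion {c : Set (Set BForm)} (hne : c.Nonempty) (hdir : DirectedOn (· ⊆ ·) c)
    (hc : ∀ S ∈ c, IsTheory Ax S) : IsTheory Ax (⋃₀ c) where
  mem_of_logic A hA := by
    obtain ⟨S, hS⟩ := hne
    exact ⟨S, hS, (hc S hS).mem_of_logic hA⟩
  mp A B := by
    rintro ⟨S, hS, hAB⟩ ⟨S', hS', hA⟩
    obtain ⟨U, hU, hSU, hS'U⟩ := hdir S hS S' hS'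
    exact ⟨U, hU, (hc U hU).mp (hSU hAB) (hS'U hA)⟩

theorem isMCS_of_maximal (hT : Maximal (fun S => IsTheory Ax S ∧ B ∉ S) T) : IsMCS Ax T where
  toIsTheory := hT.prop.1
  bot_notMem hbot := hT.prop.2 (hT.prop.1.mem_of_tautology_imp (.bot_imp B) hbot)
  mem_or_neg_mem A := by
    obtain ⟨hTheory, hB⟩ := hT.prop
    have imp_mem_of_notMem : ∀ C ∉ T, imp C B ∈ T := by
      intro C hC
      by_contra hCB
      have hle : T ⊆ {D | imp C D ∈ T} := fun D =>
        hTheory.mem_of_tautology_imp (.imp_imp_left D C)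
      exact hC (hT.le_of_ge ⟨hTheory.adjoin C, hCB⟩ hle
        (hTheory.mem_of_logic (.taut (.imp_self C))))
    by_contra! h
    exact hB (hTheory.mp (hTheory.mem_of_tautology_imp (.imp_cases A B) (imp_mem_of_notMem A h.1))
      (imp_mem_of_notMem (neg A) h.2))

theorem exists_isMCS_superset (hT : IsTheory Ax T) (hB : B ∉ T) :
    ∃ M, IsMCS Ax M ∧ T ⊆ M ∧ B ∉ M := by
  obtain ⟨M, hTM, hM⟩ := zorn_subset_nonempty {S | IsTheory Ax S ∧ B ∉ S}
    (fun c hc hchain hne => ⟨⋃₀ c,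
      ⟨.sUnion hne hchain.directedOn fun S hS => (hc hS).1,
        fun ⟨S, hS, hBS⟩ => (hc hS).2 hBS⟩,
      fun S hS => Set.subset_sUnion_of_mem hS⟩) T ⟨hT, hB⟩
  exact ⟨M, isMCS_of_maximal hM, hTM, hM.prop.2⟩

end IsTheory

/-! ### The canonical model -/

/-- The worlds of the canonical model of `Logic Ax`: its maximal consistent sets. -/
def CanonicalWorld (Ax : Set BForm) : Type := {x : Set BForm // IsMCS Ax x}

namespace CanonicalWorld

variable {Ax : Set BForm}

instance : SetLike (CanonicalWorld Ax) BForm where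
  coe := Subtype.val
  coe_injective := Subtype.val_injective

/-- The canonical accessibility relation of `□`. -/
def boxRel (x y : CanonicalWorld Ax) : Prop := ∀ ⦃A⦄, box A ∈ x → A ∈ y

/-- The canonical accessibility relation of `[≠]`. -/
def dboxRel (x y : CanonicalWorld Ax) : Prop := ∀ ⦃A⦄, dbox A ∈ x → A ∈ y

/-- The canonical valuation. -/
def val (Ax : Set BForm) (n : ℕ) : Set (CanonicalWorld Ax) := {x | var n ∈ x}

variable {x y z : CanonicalWorld Ax} {A B : BForm}

theorem isMCS (x : CanonicalWorld Ax) : IsMCS Ax x := x.2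

theorem exists_superset_notMem {T : Set BForm} (hT : IsTheory Ax T) (hB : B ∉ T) :
    ∃ x : CanonicalWorld Ax, T ⊆ x ∧ B ∉ x := by
  obtain ⟨M, hM, hTM, hBM⟩ := hT.exists_isMCS_superset hB
  exact ⟨⟨M, hM⟩, hTM, hBM⟩

theorem mem_imp_iff : imp A B ∈ x ↔ (A ∈ x → B ∈ x) := by
  refine ⟨fun h => x.isMCS.mp h, fun h => ?_⟩
  rcases x.isMCS.mem_or_neg_mem A with hA | hA
  · exact x.isMCS.mem_of_tautology_imp (.imp_imp_left B A) (h hA)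
  · exact x.isMCS.mem_of_tautology_imp (.neg_imp_imp A B) hA

theorem mem_neg_iff : neg A ∈ x ↔ A ∉ x :=
  mem_imp_iff.trans (imp_congr_right fun _ => iff_false_intro x.isMCS.bot_notMem)

theorem mem_conj_iff : conj A B ∈ x ↔ A ∈ x ∧ B ∈ x := by
  simp only [conj, mem_neg_iff, mem_imp_iff, Classical.not_imp, not_not]

theorem mem_box_iff : box A ∈ x ↔ ∀ y, boxRel x y → A ∈ y := by
  refine ⟨fun h y hxy => hxy h, fun h => ?_⟩
  by_contra hA
  obtain ⟨y, hxy, hAy⟩ := exists_superset_notMem x.isMCS.preimage_box hA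
  exact hAy (h y hxy)

theorem mem_dbox_iff : dbox A ∈ x ↔ ∀ y, dboxRel x y → A ∈ y := by
  refine ⟨fun h y hxy => hxy h, fun h => ?_⟩
  by_contra hA
  obtain ⟨y, hxy, hAy⟩ := exists_superset_notMem x.isMCS.preimage_dbox hA
  exact hAy (h y hxy)

theorem dbox_mem_of_tautology_imp (h : Tautology (imp A B)) (hA : dbox A ∈ x) : dbox B ∈ x :=
  mem_dbox_iff.2 fun y hxy => y.isMCS.mem_of_tautology_imp h (hxy hA)

theorem exists_mem_notMem_of_ne (hne : x ≠ z) : ∃ C ∈ x, C ∉ z := by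
  by_contra! hxz
  refine hne (SetLike.ext fun C => ⟨hxz C, fun hCz => ?_⟩)
  by_contra hCx
  exact mem_neg_iff.1 (hxz _ (mem_neg_iff.2 hCx)) hCz

-- The witness is the disjunction `A ∨ C`, written `¬A → C`, for a `C` that separates `x` from `z`.
theorem exists_mem_dbox_mem_notMem_of_ne (hne : x ≠ z) (hA : dbox A ∈ x) (hAz : A ∉ z) :
    ∃ E ∈ x, dbox E ∈ x ∧ E ∉ z := by
  obtain ⟨C, hCx, hCz⟩ := exists_mem_notMem_of_ne hne
  refine ⟨imp (neg A) C, mem_imp_iff.2 fun _ => hCx,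
    dbox_mem_of_tautology_imp (.imp_neg_imp A C) hA, fun hE => ?_⟩
  exact hCz (mem_imp_iff.1 hE (mem_neg_iff.2 hAz))

theorem boxRel_refl (x : CanonicalWorld Ax) : boxRel x x :=
  fun A => x.isMCS.mem_of_logic_imp (.box_imp_self A)

theorem boxRel_trans (hxy : boxRel x y) (hyz : boxRel y z) : boxRel x z :=
  fun A hA => hyz (hxy (x.isMCS.mem_of_logic_imp (.box_imp_box_box A) hA))

theorem dboxRel_symm (hxy : dboxRel x y) : dboxRel y x := by
  intro A hA
  by_contra hAx
  have hddia : ddia (neg A) ∈ y :=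
    hxy (x.isMCS.mem_of_logic_imp (.imp_dbox_ddia (neg A)) (mem_neg_iff.2 hAx))
  have hdbox : dbox (neg (neg A)) ∈ y := dbox_mem_of_tautology_imp (.imp_neg_imp A bot) hA
  exact mem_neg_iff.1 hddia hdbox

theorem dboxRel_pseudotrans (hxy : dboxRel x y) (hyz : dboxRel y z) (hne : x ≠ z) :
    dboxRel x z := by
  intro A hA
  by_contra hAz
  obtain ⟨E, hEx, hdE, hEz⟩ := exists_mem_dbox_mem_notMem_of_ne hne hA hAz
  have hddE : dbox (dbox E) ∈ x :=
    x.isMCS.mem_of_logic_imp (.conj_dbox_imp_dbox_dbox E) (mem_conj_iff.2 ⟨hEx, hdE⟩)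
  exact hEz (hyz (hxy hddE))

theorem dboxRel_of_boxRel_of_ne (hxz : boxRel x z) (hne : x ≠ z) : dboxRel x z := by
  intro A hA
  by_contra hAz
  obtain ⟨E, hEx, hdE, hEz⟩ := exists_mem_dbox_mem_notMem_of_ne hne hA hAz
  have hbE : box E ∈ x :=
    x.isMCS.mem_of_logic_imp (.dbox_conj_imp_box E) (mem_conj_iff.2 ⟨hdE, hEx⟩)
  exact hEz (hxz hbE)

theorem isS4DFrame (Ax : Set BForm) :
    IsS4DFrame (boxRel (Ax := Ax)) (dboxRel (Ax := Ax)) where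
  refl := boxRel_refl
  trans _ _ _ := boxRel_trans
  symm _ _ := dboxRel_symm
  ptrans _ _ _ := dboxRel_pseudotrans
  inc _ _ hxy := or_iff_not_imp_right.2 (dboxRel_of_boxRel_of_ne hxy)

theorem ksat_iff_mem : ksat boxRel dboxRel (val Ax) x A ↔ A ∈ x := by
  induction A generalizing x with
  | var n => rfl
  | bot => exact iff_of_false id x.isMCS.bot_notMem
  | imp A B ihA ihB => simp only [ksat, ihA, ihB, mem_imp_iff]
  | box A ih => simp only [ksat, ih, mem_box_iff]
  | dbox A ih => simp only [ksat, ih, mem_dbox_iff]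

theorem logic_of_kvalid (hA : kvalid (boxRel (Ax := Ax)) dboxRel A) : Logic Ax A := by
  by_contra hnA
  obtain ⟨x, -, hAx⟩ := exists_superset_notMem (isTheory_logic Ax) hnA
  exact hAx (ksat_iff_mem.1 (hA (val Ax) x))

end CanonicalWorld

/-! ### Generated subframes -/

theorem ksat_subrel_iff {W : Type} {R RD : W → W → Prop} {θ : ℕ → Set W} {p : W → Prop}
    (hR : ∀ ⦃y z⦄, p y → R y z → p z) (hRD : ∀ ⦃y z⦄, p y → RD y z → p z) {A : BForm}
    {x : Subtype p} :
    ksat (Subrel R p) (Subrel RD p) (fun n => Subtype.val ⁻¹' θ n) x A ↔ ksat R RD θ x A := by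
  induction A generalizing x with
  | var n => rfl
  | bot => rfl
  | imp A B ihA ihB => simp only [ksat, ihA, ihB]
  | box A ih =>
    simp only [ksat, ih]
    exact ⟨fun h y hxy => h ⟨y, hR x.2 hxy⟩ hxy, fun h y hxy => h y hxy⟩
  | dbox A ih =>
    simp only [ksat, ih]
    exact ⟨fun h y hxy => h ⟨y, hRD x.2 hxy⟩ hxy, fun h y hxy => h y hxy⟩

namespace IsS4DFrame

variable {W : Type} {R RD : W → W → Prop}

theorem of_pairwise (hrefl : ∀ x, R x x) (htrans : ∀ ⦃x y z⦄, R x y → R y z → R x z)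
    (hsymm : ∀ ⦃x y⦄, RD x y → RD y x) (hRD : Pairwise RD) : IsS4DFrame R RD where
  refl := hrefl
  trans := htrans
  symm := hsymm
  ptrans _ _ _ _ _ hne := hRD hne
  inc _ _ _ := or_iff_not_imp_right.2 fun hne => hRD hne

theorem subrel (hF : IsS4DFrame R RD) (p : W → Prop) : IsS4DFrame (Subrel R p) (Subrel RD p) where
  refl x := hF.refl x
  trans _ _ _ hxy hyz := hF.trans hxy hyz
  symm _ _ hxy := hF.symm hxy
  ptrans _ _ _ hxy hyz hne := hF.ptrans hxy hyz (Subtype.coe_ne_coe.2 hne)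
  inc _ _ hxy := (hF.inc hxy).imp_right Subtype.ext

theorem equivalence_reflGen (hF : IsS4DFrame R RD) : Equivalence (ReflGen RD) where
  refl _ := .refl
  symm
    | .refl => .refl
    | .single hxy => .single (hF.symm hxy)
  trans {x y z}
    | .refl, hyz => hyz
    | hxy, .refl => hxy
    | .single hxy, .single hyz => by
      by_cases hxz : x = z
      · exact hxz ▸ .refl
      · exact .single (hF.ptrans hxy hyz hxz)

theorem reflGen_of_rel (hF : IsS4DFrame R RD) {x y : W} (hxy : R x y) : ReflGen RD x y :=
  (reflGen_iff RD x y).2 ((hF.inc hxy).symm.imp_left Eq.symm)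

theorem pairwise_subrel_reflGen (hF : IsS4DFrame R RD) (x : W) :
    Pairwise (Subrel RD (ReflGen RD x)) := by
  intro y z hne
  have hyz : ReflGen RD y z := hF.equivalence_reflGen.trans (hF.equivalence_reflGen.symm y.2) z.2
  exact ((reflGen_iff RD _ _).1 hyz).resolve_left (Subtype.coe_ne_coe.2 hne.symm)

end IsS4DFrame

/-! ### Filtration -/

/-- A set of formulas closed under subformulas. -/
structure IsSubformulaClosed (Γ : Set BForm) : Prop where
  imp_left : ∀ ⦃A B⦄, imp A B ∈ Γ → A ∈ Γ
  imp_right : ∀ ⦃A B⦄, imp A B ∈ Γ → B ∈ Γ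
  of_box : ∀ ⦃A⦄, box A ∈ Γ → A ∈ Γ
  of_dbox : ∀ ⦃A⦄, dbox A ∈ Γ → A ∈ Γ

/-- The finite set of subformulas of a formula, including the formula itself. -/
def BForm.subformulas : BForm → Finset BForm
  | .var n => {.var n}
  | .bot => {.bot}
  | .imp A B => insert (.imp A B) (subformulas A ∪ subformulas B)
  | .box A => insert (.box A) (subformulas A)
  | .dbox A => insert (.dbox A) (subformulas A)

theorem mem_subformulas_self (A : BForm) : A ∈ subformulas A := by
  cases A <;> simp [subformulas]

theorem isSubformulaClosed_subformulas (A : BForm) :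
    IsSubformulaClosed (subformulas A : Set BForm) := by
  have hself := mem_subformulas_self
  induction A with
  | var n => constructor <;> grind [subformulas]
  | bot => constructor <;> grind [subformulas]
  | imp A B ihA ihB =>
    obtain ⟨_, _, _, _⟩ := ihA
    obtain ⟨_, _, _, _⟩ := ihB
    constructor <;> grind [subformulas]
  | box A ih =>
    obtain ⟨_, _, _, _⟩ := ih
    constructor <;> grind [subformulas]
  | dbox A ih =>
    obtain ⟨_, _, _, _⟩ := ih
    constructor <;> grind [subformulas]

section Filtration

variable {W : Type} (R RD : W → W → Prop) (θ : ℕ → Set W) (Γ : Set BForm)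

/-- The formulas of `Γ` true at `x`; two points are identified in the filtration through `Γ` when
their traces agree. -/
def truthTrace (x : W) : Set BForm := {A ∈ Γ | ksat R RD θ x A}

/-- The worlds of the filtration through `Γ`, each class of `Γ`-equivalent points being encoded
by its common trace. -/
def FiltrationWorld : Type := Set.range (truthTrace R RD θ Γ)

namespace FiltrationWorld

/-- The projection onto the filtration. -/
def mk (x : W) : FiltrationWorld R RD θ Γ := Set.rangeFactorization (truthTrace R RD θ Γ) x

variable {R RD θ Γ}

/-- The transitive (Lemmon) filtration of `R`. -/
def boxRel (s t : FiltrationWorld R RD θ Γ) : Prop := ∀ ⦃A⦄, box A ∈ s.1 → box A ∈ t.1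

/-- The minimal filtration of `R_D`. -/
def dboxRel : FiltrationWorld R RD θ Γ → FiltrationWorld R RD θ Γ → Prop :=
  Relation.Map RD (mk R RD θ Γ) (mk R RD θ Γ)

variable (R RD θ Γ) in
/-- The valuation of the filtration. -/
def val (n : ℕ) : Set (FiltrationWorld R RD θ Γ) := {s | var n ∈ s.1}

theorem mk_surjective : Function.Surjective (mk R RD θ Γ) := Set.rangeFactorization_surjective

theorem mk_eq_mk_iff {x y : W} :
    mk R RD θ Γ x = mk R RD θ Γ y ↔ ∀ A ∈ Γ, (ksat R RD θ x A ↔ ksat R RD θ y A) := by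
  simp [mk, Set.rangeFactorization, truthTrace, Set.ext_iff, FiltrationWorld]

theorem finite (hΓ : Γ.Finite) : Finite (FiltrationWorld R RD θ Γ) :=
  hΓ.finite_subsets.subset (Set.range_subset_iff.2 fun _ => Set.sep_subset _ _)

theorem pairwise_dboxRel (hRD : Pairwise RD) :
    Pairwise (dboxRel : FiltrationWorld R RD θ Γ → FiltrationWorld R RD θ Γ → Prop) := by
  intro s t hne
  obtain ⟨x, rfl⟩ := mk_surjective s
  obtain ⟨y, rfl⟩ := mk_surjective t
  exact ⟨x, y, hRD (ne_of_apply_ne _ hne), rfl, rfl⟩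

theorem isS4DFrame (hsymm : ∀ ⦃x y⦄, RD x y → RD y x) (hRD : Pairwise RD) :
    IsS4DFrame (boxRel : FiltrationWorld R RD θ Γ → FiltrationWorld R RD θ Γ → Prop) dboxRel :=
  .of_pairwise (fun _ _ => id) (fun _ _ _ hst htu _ hA => htu (hst hA))
    (fun _ _ ⟨x, y, hxy, hx, hy⟩ => ⟨y, x, hsymm hxy, hy, hx⟩) (pairwise_dboxRel hRD)

theorem boxRel_mk (htrans : ∀ ⦃x y z⦄, R x y → R y z → R x z) {x y : W} (hxy : R x y) :
    boxRel (mk R RD θ Γ x) (mk R RD θ Γ y) :=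
  fun _ hA => ⟨hA.1, fun z hyz => hA.2 z (htrans hxy hyz)⟩

theorem ksat_of_boxRel_mk (hrefl : ∀ x, R x x) {x y : W}
    (hxy : boxRel (mk R RD θ Γ x) (mk R RD θ Γ y)) {A : BForm} (hA : box A ∈ Γ)
    (hx : ksat R RD θ x (box A)) : ksat R RD θ y A :=
  (hxy ⟨hA, hx⟩).2 y (hrefl y)

theorem ksat_mk_iff (hrefl : ∀ x, R x x) (htrans : ∀ ⦃x y z⦄, R x y → R y z → R x z)
    (hΓ : IsSubformulaClosed Γ) {A : BForm} (hA : A ∈ Γ) {x : W} :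
    ksat boxRel dboxRel (val R RD θ Γ) (mk R RD θ Γ x) A ↔ ksat R RD θ x A := by
  induction A generalizing x with
  | var n => exact and_iff_right hA
  | bot => rfl
  | imp A B ihA ihB => exact imp_congr (ihA (hΓ.imp_left hA)) (ihB (hΓ.imp_right hA))
  | box A ih =>
    have ih {y : W} := @ih (hΓ.of_box hA) y
    simp only [ksat, mk_surjective.forall, ih]
    exact ⟨fun h y hxy => h y (boxRel_mk htrans hxy),
      fun h y hxy => ksat_of_boxRel_mk hrefl hxy hA h⟩
  | dbox A ih =>
    have ih {y : W} := @ih (hΓ.of_dbox hA) y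
    simp only [ksat, mk_surjective.forall, ih]
    refine ⟨fun h y hxy => h y ⟨x, y, hxy, rfl, rfl⟩, ?_⟩
    rintro h y ⟨x', y', hxy', hx, hy⟩
    have hx' : ksat R RD θ x' (dbox A) := (mk_eq_mk_iff.1 hx (dbox A) hA).2 h
    exact (mk_eq_mk_iff.1 hy A (hΓ.of_dbox hA)).1 (hx' y' hxy')

end FiltrationWorld

end Filtration

/-! ### The finite model property -/

theorem kvalid_of_forall_finite_of_pairwise {W : Type} {R RD : W → W → Prop} {A : BForm}
    (hF : IsS4DFrame R RD) (hRD : Pairwise RD)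
    (hA : ∀ (W' : Type) (R' RD' : W' → W' → Prop), Finite W' → IsS4DFrame R' RD' →
      kvalid R' RD' A) :
    kvalid R RD A := by
  intro θ x
  rw [← FiltrationWorld.ksat_mk_iff hF.refl hF.trans (isSubformulaClosed_subformulas A)
    (mem_subformulas_self A)]
  exact hA _ _ _ (FiltrationWorld.finite (subformulas A).finite_toSet)
    (FiltrationWorld.isS4DFrame hF.symm hRD) _ _

theorem kvalid_of_forall_finite {W : Type} {R RD : W → W → Prop} {A : BForm}
    (hF : IsS4DFrame R RD)
    (hA : ∀ (W' : Type) (R' RD' : W' → W' → Prop), Finite W' → IsS4DFrame R' RD' →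
      kvalid R' RD' A) :
    kvalid R RD A := by
  intro θ x
  have hgen := kvalid_of_forall_finite_of_pairwise (hF.subrel (ReflGen RD x))
    (hF.pairwise_subrel_reflGen x) hA (fun n => Subtype.val ⁻¹' θ n) ⟨x, .refl⟩
  exact (ksat_subrel_iff
    (fun y z hxy hyz => hF.equivalence_reflGen.trans hxy (hF.reflGen_of_rel hyz))
    (fun y z hxy hyz => hF.equivalence_reflGen.trans hxy (.single hyz))).1 hgen

/-- finite model property of S4D: `A ∈ S4D` iff `A` is valid in every
finite S4D-frame. -/
theorem s4d_fmp (A : BForm) :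
    S4D A ↔ ∀ (W : Type) (R RD : W → W → Prop), Finite W → IsS4DFrame R RD →
      kvalid R RD A := by
  constructor
  · intro hA W R RD _ hF
    exact Logic.sound hF (fun _ hB => hB.elim) hA
  · intro hA
    exact CanonicalWorld.logic_of_kvalid
      (kvalid_of_forall_finite (CanonicalWorld.isS4DFrame ∅) hA)
end

section
/- Let F = (W, R, R_D) be an S4D-frame such that R_D ∪ Id_W = W × W (every two distinct points are R_D-related). Then there exists an S4D-frame F' = (W', R', R_D') in which R_D' is exactly the inequality relation on W' (x'R_D'y' iff x' ≠ y'), together with a p-morphism from F' onto F. -/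
open Function

theorem isS4DFrame_ne {X : Type} {S : X → X → Prop} (hrefl : ∀ x, S x x)
    (htrans : ∀ ⦃x y z⦄, S x y → S y z → S x z) : IsS4DFrame S Ne where
  refl := hrefl
  trans := htrans
  symm _ _ hxy := hxy.symm
  ptrans _ _ _ _ _ hxz := hxz
  inc x y _ := ne_or_eq x y

theorem isPMorphism_onFun_ne {X W : Type} {R RD : W → W → Prop} {f : X → W}
    (hf : Surjective f) (hRD : ∀ x w, RD (f x) w ↔ ∃ y, x ≠ y ∧ f y = w) :
    IsPMorphism (R on f) Ne R RD f where
  surj := hf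
  forth _ _ hxy := hxy
  forthD x y hxy := (hRD x (f y)).2 ⟨y, hxy, rfl⟩
  back _ w hxw := by
    obtain ⟨y, rfl⟩ := hf w
    exact ⟨y, hxw, rfl⟩
  backD x w := (hRD x w).1

theorem rel_iff_exists_ne_of_nontrivial_fiber {X W : Type*} {RD : W → W → Prop} {f : X → W}
    (hf : Surjective f) (huniv : ∀ v w, v ≠ w → RD v w)
    (hfiber : ∀ w, (f ⁻¹' {w}).Nontrivial ↔ RD w w) (x : X) (w : W) :
    RD (f x) w ↔ ∃ y, x ≠ y ∧ f y = w := by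
  by_cases hxw : f x = w
  · subst hxw
    rw [← hfiber]
    constructor
    · intro hnontrivial
      obtain ⟨y, hy, hyx⟩ := hnontrivial.exists_ne x
      exact ⟨y, hyx.symm, hy⟩
    · rintro ⟨y, hxy, hy⟩
      exact ⟨x, rfl, y, hy, hxy⟩
  · obtain ⟨y, rfl⟩ := hf w
    exact iff_of_true (huniv _ _ hxw) ⟨y, ne_of_apply_ne f hxw, rfl⟩

/-- The unfolding of `W` along a relation `RD`: one copy `inl w` of each point `w`, and a second
copy `inr w` of each `RD`-reflexive point. -/
abbrev ReflDoubling {W : Type*} (RD : W → W → Prop) := W ⊕ {w : W // RD w w}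

namespace ReflDoubling

variable {W : Type*} (RD : W → W → Prop)

/-- The projection of the doubling, sending each copy of a point to that point. -/
def proj : ReflDoubling RD → W := Sum.elim id Subtype.val

theorem proj_surjective : Surjective (proj RD) := fun w => ⟨.inl w, rfl⟩

theorem nontrivial_proj_fiber_iff (w : W) : (proj RD ⁻¹' {w}).Nontrivial ↔ RD w w := by
  constructor
  · rintro ⟨x, hx, y, hy, hxy⟩
    match x, y, hx, hy with
    | .inr v, _, rfl, _ => exact v.2
    | .inl _, .inr v, _, rfl => exact v.2
    | .inl _, .inl _, rfl, rfl => exact absurd rfl hxy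
  · exact fun hw => ⟨.inl w, rfl, .inr ⟨w, hw⟩, rfl, Sum.inl_ne_inr⟩

end ReflDoubling

/-- every S4D-frame in which `R_D ∪ Id` is universal is a p-morphic
image of an S4D-frame whose difference relation is actual inequality. -/
theorem unfold_to_inequality_frame {W : Type} (R RD : W → W → Prop)
    (hF : IsS4DFrame R RD) (huniv : ∀ x y : W, x ≠ y → RD x y) :
    ∃ (W' : Type) (R' RD' : W' → W' → Prop) (f : W' → W),
      IsS4DFrame R' RD' ∧ (∀ x y : W', RD' x y ↔ x ≠ y) ∧
      IsPMorphism R' RD' R RD f := by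
  have hRD := rel_iff_exists_ne_of_nontrivial_fiber (ReflDoubling.proj_surjective RD) huniv
    (ReflDoubling.nontrivial_proj_fiber_iff RD)
  refine ⟨ReflDoubling RD, R on ReflDoubling.proj RD, Ne, ReflDoubling.proj RD, ?_,
    fun _ _ => Iff.rfl, ?_⟩
  · exact isS4DFrame_ne (fun _ => hF.refl _) (fun _ _ _ hxy hyz => hF.trans hxy hyz)
  · exact isPMorphism_onFun_ne (ReflDoubling.proj_surjective RD) hRD
end
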